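/- arXiv:2501.11636 — 4 statements merged into one kernel-verified Lean document; each statement's English description precedes it below -/
import Mathlib

section
/- Let φ : ℕ → ℕ be an injective computable function whose range is not a computable (decidable) subset of ℕ. Then the real number x_A = Σ_{ℓ=0}^∞ 2^(−φ(ℓ)) is not a computable real number. -/
open Filter

/-- A real number `x` is computable if there is a computable sequence of rationals
approximating it to precision `2^(-n)`. -/
def IsComputableReal (x : ℝ) : Prop :=
  ∃ q : ℕ → ℚ, Computable q ∧ ∀ n : ℕ, |x - (q n : ℝ)| ≤ 2 ^ (-(n : ℤ))

namespace CompReal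

/-- The auxiliary encoding of the rationals (numerator, denominator). -/
def oldEnc : ℚ → ℕ := @Encodable.encode ℚ Rat.instEncodable

theorem oldEnc_eq (q : ℚ) : oldEnc q = Nat.pair (Equiv.intEquivNat q.num) q.den := rfl

theorem natAbs_code (z : ℤ) : z.natAbs = (Equiv.intEquivNat z + 1) / 2 := by
  cases z with
  | ofNat n => 
    have : Equiv.intEquivNat (Int.ofNat n) = 2 * n := rfl
    rw [this, Int.natAbs_ofNat']; omega
  | negSucc n =>
    have : Equiv.intEquivNat (Int.negSucc n) = 2 * n + 1 := rfl
    rw [this, Int.natAbs_negSucc]; omega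

theorem toNat_code (z : ℤ) :
    z.toNat = if Equiv.intEquivNat z % 2 = 0 then Equiv.intEquivNat z / 2 else 0 := by
  cases z with
  | ofNat n => 
    have : Equiv.intEquivNat (Int.ofNat n) = 2 * n := rfl
    rw [this]; simp
  | negSucc n =>
    have : Equiv.intEquivNat (Int.negSucc n) = 2 * n + 1 := rfl
    rw [this]
    have h : (2 * n + 1) % 2 = 1 := by omega
    simp [h]

/-- Primitive recursive description of the range of `oldEnc`. -/
def Good (m : ℕ) : Prop :=
  0 < m.unpair.2 ∧ ∀ k < m.unpair.2 + 1,
    (((m.unpair.1 + 1) / 2) % k = 0 ∧ m.unpair.2 % k = 0) → k = 1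

theorem good_iff (m : ℕ) : Good m ↔ m ∈ Set.range oldEnc := by
  have hc : ∀ a d : ℕ, 0 < d →
      ((∀ k < d + 1, (a % k = 0 ∧ d % k = 0) → k = 1) ↔ a.Coprime d) := by
    intro a d hd
    constructor
    · intro h
      have h1 := Nat.gcd_dvd_left a d
      have h2 := Nat.gcd_dvd_right a d
      exact h (Nat.gcd a d) (Nat.lt_succ_of_le (Nat.le_of_dvd hd h2))
        ⟨Nat.mod_eq_zero_of_dvd h1, Nat.mod_eq_zero_of_dvd h2⟩
    · rintro h k - ⟨h1, h2⟩
      exact Nat.eq_one_of_dvd_coprimes h (Nat.dvd_of_mod_eq_zero h1) (Nat.dvd_of_mod_eq_zero h2)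
  constructor
  · rintro ⟨hd, h⟩
    rw [hc _ _ hd] at h
    have hn := natAbs_code (Equiv.intEquivNat.symm m.unpair.1)
    rw [Equiv.apply_symm_apply] at hn
    rw [← hn] at h
    refine ⟨⟨Equiv.intEquivNat.symm m.unpair.1, m.unpair.2, hd.ne', h⟩, ?_⟩
    rw [oldEnc_eq]
    simp
  · rintro ⟨q, rfl⟩
    rw [Good, oldEnc_eq]
    simp only [Nat.unpair_pair]
    refine ⟨q.den_pos, ?_⟩
    rw [hc _ _ q.den_pos, ← natAbs_code]
    exact q.reduced

theorem good_primrec : PrimrecPred Good := by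
  have hu1 : Primrec fun m : ℕ => m.unpair.1 := Primrec.fst.comp Primrec.unpair
  have hu2 : Primrec fun m : ℕ => m.unpair.2 := Primrec.snd.comp Primrec.unpair
  have hR : PrimrecRel fun k m : ℕ =>
      (((m.unpair.1 + 1) / 2) % k = 0 ∧ m.unpair.2 % k = 0) → k = 1 := by
    have h1 : PrimrecPred fun p : ℕ × ℕ => ((p.2.unpair.1 + 1) / 2) % p.1 = 0 :=
      Primrec.eq.comp (Primrec.nat_mod.comp (Primrec.nat_div.comp
        (Primrec.succ.comp (hu1.comp Primrec.snd)) (Primrec.const 2)) Primrec.fst)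
        (Primrec.const 0)
    have h2 : PrimrecPred fun p : ℕ × ℕ => p.2.unpair.2 % p.1 = 0 :=
      Primrec.eq.comp (Primrec.nat_mod.comp (hu2.comp Primrec.snd) Primrec.fst)
        (Primrec.const 0)
    have h3 : PrimrecPred fun p : ℕ × ℕ => p.1 = 1 :=
      Primrec.eq.comp Primrec.fst (Primrec.const 1)
    refine PrimrecPred.primrecRel (p := fun p : ℕ × ℕ =>
      (((p.2.unpair.1 + 1) / 2) % p.1 = 0 ∧ p.2.unpair.2 % p.1 = 0) → p.1 = 1) ?_
    refine ((h1.and h2).not.or h3).of_eq ?_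
    intro p
    tauto
  have hF := (hR.forall_lt).comp (Primrec.succ.comp hu2) Primrec.id
  have hP : PrimrecPred fun m : ℕ => 0 < m.unpair.2 :=
    Primrec.nat_lt.comp (Primrec.const 0) hu2
  exact hP.and hF

theorem exists_search {P : ℕ → ℕ → Bool} (hP : Computable₂ P) (h : ∀ n, ∃ m, P n m = true) :
    ∃ f : ℕ → ℕ, Computable f ∧ (∀ n, P n (f n) = true) ∧ ∀ n m, P n m = true → f n ≤ m := by
  classical
  refine ⟨fun n => Nat.find (h n), ?_, fun n => Nat.find_spec (h n),
    fun n m hm => Nat.find_min' (h n) hm⟩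
  have hp : Partrec₂ (fun n m => (Part.some (P n m) : Part Bool)) := hP.partrec₂
  refine (Partrec.rfind hp).of_eq_tot ?_
  intro n
  refine Nat.mem_rfind.2 ⟨?_, ?_⟩
  · simpa using (Nat.find_spec (h n)).symm
  · intro m hm
    have := Nat.find_min (h n) hm
    simpa using this

theorem oldEnc_computable : Computable oldEnc := by
  let dec : DecidablePred (· ∈ Set.range oldEnc) :=
    @Encodable.decidableRangeEncode ℚ Rat.instEncodable
  let inf : Infinite (Set.range oldEnc) :=
    Infinite.of_injective _
      (Equiv.ofInjective _ (@Encodable.encode_injective ℚ Rat.instEncodable)).injective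
  have h (k) : oldEnc (Denumerable.ofNat ℚ k) = (Nat.Subtype.ofNat (Set.range oldEnc) k : ℕ) := by
    have h1 : Denumerable.ofNat ℚ k = (@Encodable.equivRangeEncode ℚ Rat.instEncodable).symm
        (Nat.Subtype.ofNat (Set.range oldEnc) k) := rfl
    rw [h1]
    exact congrArg Subtype.val
      ((@Encodable.equivRangeEncode ℚ Rat.instEncodable).apply_symm_apply _)
  obtain ⟨dg, hg⟩ := good_primrec
  have hP : Computable₂ fun x m : ℕ => decide (Good (x + m + 1)) := by
    have := (hg.comp (Primrec.succ.comp (Primrec.nat_add.comp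
      (Primrec.fst (α := ℕ) (β := ℕ)) Primrec.snd))).to_comp
    exact this
  obtain ⟨f, hf, hf1, hf2⟩ := exists_search hP (by
    intro x
    obtain ⟨y, hy, hxy⟩ := (Set.infinite_coe_iff.1 inf).exists_gt x
    refine ⟨y - x - 1, ?_⟩
    have : x + (y - x - 1) + 1 = y := by omega
    rw [this]
    simpa using (good_iff y).2 hy)
  have hs : ∀ x : Set.range oldEnc, (Nat.Subtype.succ x : ℕ) = x + f x + 1 := by
    intro x
    have h1 : (Nat.Subtype.succ x : ℕ) = x + Nat.find (Nat.Subtype.exists_succ x) + 1 := rfl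
    rw [h1]
    have h2 : Nat.find (Nat.Subtype.exists_succ x) = f x := by
      apply le_antisymm
      · apply Nat.find_min'
        exact (good_iff _).1 (by simpa using hf1 x)
      · apply hf2
        simpa using (good_iff _).2 (Nat.find_spec (Nat.Subtype.exists_succ x))
    rw [h2]
  have hrec : ∀ k, oldEnc (Denumerable.ofNat ℚ k) =
      Nat.rec (oldEnc (Denumerable.ofNat ℚ 0)) (fun _ y => y + f y + 1) k := by
    intro k
    induction k with
    | zero => rfl
    | succ k ih =>
      rw [h (k + 1)]
      show (Nat.Subtype.succ (Nat.Subtype.ofNat (Set.range oldEnc) k) : ℕ) = _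
      rw [hs, ← h k, ih]
  have hc : Computable fun k : ℕ => oldEnc (Denumerable.ofNat ℚ k) := by
    have hstep : Computable₂ fun (_ : ℕ) (p : ℕ × ℕ) => p.2 + f p.2 + 1 := by
      have h2 : Computable fun p : ℕ × (ℕ × ℕ) => p.2.2 := Computable.snd.comp Computable.snd
      exact Computable.succ.comp (Primrec.nat_add.to_comp.comp h2 (hf.comp h2))
    refine (Computable.nat_rec Computable.id
      (Computable.const (oldEnc (Denumerable.ofNat ℚ 0))) hstep).of_eq ?_
    intro k
    exact (hrec k).symm
  refine (hc.comp Computable.encode).of_eq ?_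
  intro q
  rw [Denumerable.ofNat_encode]

theorem den_computable : Computable (fun q : ℚ => q.den) := by
  refine ((Computable.snd.comp Computable.unpair).comp oldEnc_computable).of_eq ?_
  intro q
  simp [oldEnc_eq]

theorem num_computable : Computable (fun q : ℚ => q.num.toNat) := by
  have h1 : Primrec fun e : ℕ => if e % 2 = 0 then e / 2 else 0 := by
    refine Primrec.ite (Primrec.eq.comp (Primrec.nat_mod.comp Primrec.id (Primrec.const 2))
      (Primrec.const 0)) (Primrec.nat_div.comp Primrec.id (Primrec.const 2)) (Primrec.const 0)
  refine (h1.to_comp.comp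
    ((Computable.fst.comp Computable.unpair).comp oldEnc_computable)).of_eq ?_
  intro q
  rw [toNat_code, oldEnc_eq, Nat.unpair_pair]

theorem two_pow_primrec : Primrec fun n : ℕ => 2 ^ n := by
  have h : Primrec₂ ((· ^ ·) : ℕ → ℕ → ℕ) := Primrec₂.unpaired'.1 Nat.Primrec.pow
  exact h.comp (Primrec.const 2) Primrec.id

/-- Partial sums as (numerator, denominator). -/
def psum (φ : ℕ → ℕ) (s : ℕ) : ℕ × ℕ :=
  Nat.rec (0, 1) (fun ℓ p => (p.1 * 2 ^ φ ℓ + p.2, p.2 * 2 ^ φ ℓ)) s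

theorem psum_computable {φ : ℕ → ℕ} (hφ : Computable φ) : Computable (psum φ) := by
  have hstep : Computable₂ fun (_ : ℕ) (p : ℕ × (ℕ × ℕ)) =>
      ((p.2.1 * 2 ^ φ p.1 + p.2.2, p.2.2 * 2 ^ φ p.1) : ℕ × ℕ) := by
    have hl : Computable fun p : ℕ × (ℕ × (ℕ × ℕ)) => 2 ^ φ p.2.1 :=
      two_pow_primrec.to_comp.comp (hφ.comp (Computable.fst.comp Computable.snd))
    have h1 : Computable fun p : ℕ × (ℕ × (ℕ × ℕ)) => p.2.2.1 :=
      Computable.fst.comp (Computable.snd.comp Computable.snd)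
    have h2 : Computable fun p : ℕ × (ℕ × (ℕ × ℕ)) => p.2.2.2 :=
      Computable.snd.comp (Computable.snd.comp Computable.snd)
    exact (Primrec.nat_add.to_comp.comp (Primrec.nat_mul.to_comp.comp h1 hl) h2).pair
      (Primrec.nat_mul.to_comp.comp h2 hl)
  exact Computable.nat_rec Computable.id (Computable.const (0, 1)) hstep

theorem psum_spec (φ : ℕ → ℕ) (s : ℕ) : 0 < (psum φ s).2 ∧
    ((psum φ s).1 : ℝ) / (psum φ s).2 = ∑ ℓ ∈ Finset.range s, (2 : ℝ) ^ (-(φ ℓ : ℤ)) := by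
  induction s with
  | zero => simp [psum]
  | succ s ih =>
    obtain ⟨h0, h1⟩ := ih
    have e : psum φ (s + 1) =
      ((psum φ s).1 * 2 ^ φ s + (psum φ s).2, (psum φ s).2 * 2 ^ φ s) := rfl
    rw [e]
    refine ⟨by positivity, ?_⟩
    rw [Finset.sum_range_succ, ← h1]
    have : ((psum φ s).2 : ℝ) ≠ 0 := by positivity
    push_cast
    rw [zpow_neg, zpow_natCast]
    field_simp

theorem bex_computable {φ : ℕ → ℕ} (hφ : Computable φ) {f : ℕ → ℕ} (hf : Computable f) :
    Computable fun n : ℕ =>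
      (Nat.rec false (fun ℓ b => b || (φ ℓ == n)) (f n) : Bool) := by
  have hstep : Computable₂ fun (n : ℕ) (p : ℕ × Bool) => (p.2 || (φ p.1 == n)) := by
    exact Primrec.or.to_comp.comp (Computable.snd.comp Computable.snd)
      (Primrec.beq.to_comp.comp (hφ.comp (Computable.fst.comp Computable.snd)) Computable.fst)
  exact Computable.nat_rec hf (Computable.const false) hstep

theorem bex_spec (φ : ℕ → ℕ) (n s : ℕ) :
    (Nat.rec false (fun ℓ b => b || (φ ℓ == n)) s : Bool) = true ↔ ∃ ℓ < s, φ ℓ = n := by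
  induction s with
  | zero => simp
  | succ s ih =>
    simp only [Bool.or_eq_true, ih, beq_iff_eq, Nat.lt_succ_iff_lt_or_eq]
    constructor
    · rintro (⟨l, h1, h2⟩ | h)
      · exact ⟨l, Or.inl h1, h2⟩
      · exact ⟨s, Or.inr rfl, h⟩
    · rintro ⟨l, h1 | rfl, h2⟩
      · exact Or.inl ⟨l, h1, h2⟩
      · exact Or.inr h2

end CompReal

open CompReal

/-- If `φ : ℕ → ℕ` is an injective computable function whose range is not a
computable (decidable) subset of `ℕ`, then `∑ ℓ, 2^(-φ ℓ)` is not a computable real. -/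
theorem stmt0 (φ : ℕ → ℕ) (hinj : Function.Injective φ) (hcomp : Computable φ)
    (hrange : ¬ ComputablePred (fun n => n ∈ Set.range φ)) :
    ¬ IsComputableReal (∑' ℓ : ℕ, (2 : ℝ) ^ (-(φ ℓ : ℤ))) := by
  rintro ⟨q, hq, hqx⟩
  apply hrange
  have hsum : Summable fun ℓ : ℕ => (2 : ℝ) ^ (-(φ ℓ : ℤ)) := by
    have h := summable_geometric_two.comp_injective hinj
    refine h.congr ?_
    intro ℓ
    simp
  set x : ℝ := ∑' ℓ : ℕ, (2 : ℝ) ^ (-(φ ℓ : ℤ)) with hx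
  have hpos : ∀ ℓ, (0 : ℝ) < 2 ^ (-(φ ℓ : ℤ)) := fun ℓ => by positivity
  have hx0 : 0 ≤ x := tsum_nonneg fun ℓ => (hpos ℓ).le
  -- nonnegative approximations as fractions
  have happ : ∀ n, |x - ((q n).num.toNat : ℝ) / (q n).den| ≤ 2 ^ (-(n : ℤ)) := by
    intro n
    have h1 := hqx n
    have hd : (0 : ℝ) < (q n).den := by exact_mod_cast (q n).den_pos
    have e : ((q n : ℚ) : ℝ) = ((q n).num : ℝ) / (q n).den := Rat.cast_def _
    rcases le_or_gt 0 (q n).num with h | h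
    · have : (((q n).num.toNat : ℕ) : ℝ) = ((q n).num : ℝ) := by
        have := Int.toNat_of_nonneg h
        exact_mod_cast this
      rw [this, ← e]
      exact h1
    · have h2 : (q n).num.toNat = 0 := by omega
      have h3 : ((q n : ℚ) : ℝ) ≤ 0 := by
        rw [e]
        exact div_nonpos_of_nonpos_of_nonneg (by exact_mod_cast h.le) hd.le
      rw [h2]
      simp only [Nat.cast_zero, zero_div, sub_zero]
      rw [abs_of_nonneg hx0]
      rw [abs_of_nonneg (by linarith)] at h1
      linarith
  -- the search predicate
  let P : ℕ → ℕ → Bool := fun n s => decide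
    ((q (n + 2)).num.toNat * (2 ^ (n + 2) * (psum φ s).2) <
      (q (n + 2)).den * (3 * (psum φ s).2 + (psum φ s).1 * 2 ^ (n + 2)))
  have hPc : Computable₂ P := by
    have hn2 : Computable fun p : ℕ × ℕ => p.1 + 2 :=
      Computable.succ.comp (Computable.succ.comp Computable.fst)
    have hqn : Computable fun p : ℕ × ℕ => q (p.1 + 2) := hq.comp hn2
    have hpw : Computable fun p : ℕ × ℕ => 2 ^ (p.1 + 2) := two_pow_primrec.to_comp.comp hn2
    have hps : Computable fun p : ℕ × ℕ => psum φ p.2 := (psum_computable hcomp).comp Computable.snd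
    have h1 := Computable.fst.comp hps
    have h2 := Computable.snd.comp hps
    have mul := Primrec.nat_mul.to_comp
    have hadd := Primrec.nat_add.to_comp
    exact (Primrec.nat_lt.decide.to_comp).comp
      (mul.comp (num_computable.comp hqn) (mul.comp hpw h2))
      (mul.comp (den_computable.comp hqn)
        (hadd.comp (mul.comp (Computable.const 3) h2) (mul.comp h1 hpw)))
  have hPspec : ∀ n s, P n s = true ↔ ((q (n + 2)).num.toNat : ℝ) / (q (n + 2)).den <
      3 / 2 ^ (n + 2) + ∑ ℓ ∈ Finset.range s, (2 : ℝ) ^ (-(φ ℓ : ℤ)) := by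
    intro n s
    obtain ⟨h0, h1⟩ := psum_spec φ s
    rw [← h1]
    have hd : (0 : ℝ) < (q (n + 2)).den := by exact_mod_cast (q (n + 2)).den_pos
    have h0' : (0 : ℝ) < (psum φ s).2 := by exact_mod_cast h0
    rw [div_add_div _ _ (by positivity) h0'.ne', div_lt_div_iff₀ hd (by positivity)]
    simp only [P, decide_eq_true_eq]
    rw [← Nat.cast_lt (α := ℝ)]
    push_cast
    constructor <;> intro h <;> linarith
  have hpow : ∀ n : ℕ, (2 : ℝ) ^ (-((n + 2 : ℕ) : ℤ)) = 1 / 2 ^ (n + 2) := by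
    intro n
    rw [zpow_neg, zpow_natCast, one_div]
  have hpow' : ∀ n : ℕ, (2 : ℝ) ^ (-(n : ℤ)) = 4 * (1 / 2 ^ (n + 2)) := by
    intro n
    rw [zpow_neg, zpow_natCast, pow_add]
    field_simp
    norm_num
  obtain ⟨f, hf, hf1, -⟩ := exists_search hPc (by
    intro n
    have ht := hsum.hasSum.tendsto_sum_nat
    have hε : x - 1 / 2 ^ (n + 2) < x := by
      have : (0 : ℝ) < 1 / 2 ^ (n + 2) := by positivity
      linarith
    obtain ⟨s, hs⟩ := (ht.eventually_const_lt hε).exists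
    refine ⟨s, (hPspec n s).2 ?_⟩
    have h1 := abs_le.1 (happ (n + 2))
    rw [hpow] at h1
    have : (0 : ℝ) < 1 / 2 ^ (n + 2) := by positivity
    have e : (3 : ℝ) / 2 ^ (n + 2) = 3 * (1 / 2 ^ (n + 2)) := by ring
    rw [e]
    linarith [h1.1])
  have key : ∀ n, n ∈ Set.range φ ↔ ∃ ℓ < f n, φ ℓ = n := by
    intro n
    constructor
    · rintro ⟨ℓ, hℓ⟩
      refine ⟨ℓ, ?_, hℓ⟩
      by_contra hlt
      have h2 := (hPspec n (f n)).1 (hf1 n)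
      have h1 := abs_le.1 (happ (n + 2))
      rw [hpow] at h1
      have e : (3 : ℝ) / 2 ^ (n + 2) = 3 * (1 / 2 ^ (n + 2)) := by ring
      rw [e] at h2
      have h3 : ∑ i ∈ insert ℓ (Finset.range (f n)), (2 : ℝ) ^ (-(φ i : ℤ)) ≤ x :=
        hsum.sum_le_tsum _ fun i _ => (hpos i).le
      rw [Finset.sum_insert (by simpa using hlt), hℓ, hpow'] at h3
      linarith [h1.2]
    · rintro ⟨ℓ, -, h⟩
      exact ⟨ℓ, h⟩
  classical
  refine ⟨inferInstance, (bex_computable hcomp hf).of_eq ?_⟩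
  intro n
  rw [Bool.eq_iff_iff, bex_spec, decide_eq_true_eq]
  exact (key n).symm
end

section
/- Let φ : ℕ → ℕ be an injective computable function whose range is not a computable (decidable) subset of ℕ. Then the real number x_A = Σ_{ℓ=0}^∞ 2^(−φ(ℓ)) is left-computable but not right-computable. -/
open Filter

/-- A real number `x` is left-computable (`Σ₁`) if it is the limit of a
monotonically nondecreasing computable sequence of rationals. -/
def LeftComputable (x : ℝ) : Prop :=
  ∃ q : ℕ → ℚ, Computable q ∧ (∀ n, q n ≤ q (n + 1)) ∧
    Tendsto (fun n => (q n : ℝ)) atTop (nhds x)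
/-- A real number `x` is right-computable (`Π₁`) if it is the limit of a
monotonically nonincreasing computable sequence of rationals. -/
def RightComputable (x : ℝ) : Prop :=
  ∃ q : ℕ → ℚ, Computable q ∧ (∀ n, q (n + 1) ≤ q n) ∧
    Tendsto (fun n => (q n : ℝ)) atTop (nhds x)

open Encodable

/-- The raw code of a rational: the pair (code of numerator, denominator). -/
def rawCode (q : ℚ) : ℕ := Nat.pair (encode q.num) q.den

theorem rawCode_inj {p q : ℚ} (h : rawCode p = rawCode q) : p = q := by
  unfold rawCode at h
  rw [Nat.pair_eq_pair] at h
  exact Rat.ext (encode_injective h.1) h.2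

theorem encode_rat_eq (q : ℚ) : @encode ℚ (Primcodable.toEncodable) q =
    @List.countP ℕ (fun y => @decide (y ∈ Set.range (@encode ℚ Rat.instEncodable))
      (decidableRangeEncode ℚ y)) (List.range (rawCode q)) := by
  with_unfolding_all rfl

theorem natAbs_eq_code (z : ℤ) : z.natAbs = (encode z + 1) / 2 := by
  cases z with
  | ofNat a =>
    have : encode (Int.ofNat a) = 2 * a := rfl
    rw [this]; simp; lia
  | negSucc a =>
    have : encode (Int.negSucc a) = 2 * a + 1 := rfl
    rw [this]; simp; lia

theorem nonneg_iff_code (z : ℤ) : 0 ≤ z ↔ (encode z) % 2 = 0 := by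
  cases z with
  | ofNat a =>
    have : encode (Int.ofNat a) = 2 * a := rfl
    rw [this]; simp
  | negSucc a =>
    have : encode (Int.negSucc a) = 2 * a + 1 := rfl
    rw [this]; simp

/-- Primitive recursive description of the raw codes of rationals. -/
def IsRawCode (m : ℕ) : Prop :=
  0 < m.unpair.2 ∧
    ∀ x < m + 1, ¬ (m.unpair.2 % x = 0 ∧ ((m.unpair.1 + 1) / 2) % x = 0) ∨ x = 1

theorem isRawCode_iff (m : ℕ) : IsRawCode m ↔ m ∈ Set.range rawCode := by
  constructor
  · rintro ⟨h0, h⟩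
    set z : ℤ := Denumerable.ofNat ℤ m.unpair.1 with hz
    have hez : encode z = m.unpair.1 := by rw [hz]; exact Denumerable.encode_ofNat _
    rw [← hez, ← natAbs_eq_code] at h
    have hc : z.natAbs.Coprime m.unpair.2 := by
      have hle : Nat.gcd z.natAbs m.unpair.2 < m + 1 := by
        have h1 := Nat.le_of_dvd h0 (Nat.gcd_dvd_right z.natAbs m.unpair.2)
        have h2 := Nat.unpair_right_le m
        lia
      rcases h _ hle with h1 | h1
      · exfalso
        apply h1
        exact ⟨Nat.mod_eq_zero_of_dvd (Nat.gcd_dvd_right _ _),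
          Nat.mod_eq_zero_of_dvd (Nat.gcd_dvd_left _ _)⟩
      · exact h1
    refine ⟨⟨z, m.unpair.2, h0.ne', hc⟩, ?_⟩
    simp only [rawCode]
    rw [hez, Nat.pair_unpair]
  · rintro ⟨q, rfl⟩
    refine ⟨by simpa [rawCode] using q.den_pos, fun x _ => ?_⟩
    simp only [rawCode, Nat.unpair_pair]
    rw [← natAbs_eq_code]
    by_cases hx : x = 1
    · exact Or.inr hx
    · left
      rintro ⟨h1, h2⟩
      exact hx (Nat.eq_one_of_dvd_coprimes q.reduced (Nat.dvd_of_mod_eq_zero h2)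
        (Nat.dvd_of_mod_eq_zero h1))

theorem isRawCode_primrec : PrimrecPred IsRawCode := by
  have h1 : PrimrecRel fun (x m : ℕ) =>
      ¬ (m.unpair.2 % x = 0 ∧ ((m.unpair.1 + 1) / 2) % x = 0) ∨ x = 1 := by
    have hu : Primrec (fun p : ℕ × ℕ => p.2.unpair) := Primrec.unpair.comp Primrec.snd
    refine PrimrecPred.or (PrimrecPred.not (PrimrecPred.and ?_ ?_)) ?_
    · exact Primrec.eq.comp (Primrec.nat_mod.comp (Primrec.snd.comp hu) Primrec.fst)
        (Primrec.const 0)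
    · exact Primrec.eq.comp (Primrec.nat_mod.comp (Primrec.nat_div.comp
        (Primrec.succ.comp (Primrec.fst.comp hu)) (Primrec.const 2)) Primrec.fst)
        (Primrec.const 0)
    · exact Primrec.eq.comp Primrec.fst (Primrec.const 1)
  have h2 := h1.forall_lt
  refine PrimrecPred.and
    (Primrec.nat_lt.comp (Primrec.const 0) (Primrec.snd.comp Primrec.unpair)) ?_
  exact h2.comp Primrec.succ Primrec.id

theorem comp_pred {α β : Type*} [Primcodable α] [Primcodable β] {p : β → Prop} {f : α → β}
    (hp : PrimrecPred p) (hf : Computable f) : ComputablePred (fun a => p (f a)) := by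
  obtain ⟨hd, hp⟩ := hp
  exact ⟨fun a => hd (f a), hp.to_comp.comp hf⟩

theorem comp_pred_and {α : Type*} [Primcodable α] {p q : α → Prop}
    (hp : ComputablePred p) (hq : ComputablePred q) : ComputablePred (fun a => p a ∧ q a) := by
  classical
  have h := Primrec.and.to_comp.comp hp.decide hq.decide
  refine (h.of_eq (g := fun a => decide (p a ∧ q a)) fun a => ?_).computablePred
  simp

theorem computable_of_find {α : Type*} [Primcodable α] {f : α → ℕ} {P : α → ℕ → Prop}
    (hP : ComputablePred (fun p : α × ℕ => P p.1 p.2)) (hex : ∀ x, P x (f x))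
    (huniq : ∀ x n, P x n → n = f x) : Computable f := by
  classical
  have := Computable.find hP (fun x => ⟨f x, hex x⟩)
  exact this.of_eq fun x => huniq x _ (Nat.find_spec (p := P x) _)

open Classical in
theorem count_primrec : Primrec (fun m => ((List.range m).filter (fun y => IsRawCode y)).length) :=
  Primrec.list_length.comp ((Primrec.listFilter isRawCode_primrec).comp Primrec.list_range)

open Classical in
theorem encode_rat_eq' (q : ℚ) : @encode ℚ (Primcodable.toEncodable) q =
    ((List.range (rawCode q)).filter (fun y => IsRawCode y)).length := by
  rw [encode_rat_eq, List.countP_eq_length_filter]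
  congr 2
  funext y
  rw [decide_eq_decide, isRawCode_iff]
  exact Iff.rfl

theorem rawCode_computable : Computable rawCode := by
  classical
  refine computable_of_find (P := fun q m => IsRawCode m ∧
    ((List.range m).filter (fun y => IsRawCode y)).length =
      @encode ℚ (Primcodable.toEncodable) q) ?_ ?_ ?_
  · refine comp_pred_and (comp_pred isRawCode_primrec Computable.snd) ?_
    exact PrimrecPred.computablePred (Primrec.eq.comp (count_primrec.comp Primrec.snd)
      (Primrec.encode.comp Primrec.fst))
  · intro q
    exact ⟨(isRawCode_iff _).2 ⟨q, rfl⟩, (encode_rat_eq' q).symm⟩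
  · rintro q m ⟨h1, h2⟩
    obtain ⟨p, rfl⟩ := (isRawCode_iff _).1 h1
    rw [← encode_rat_eq'] at h2
    rw [@encode_injective ℚ Primcodable.toEncodable _ _ h2]

theorem den_computable : Computable (fun q : ℚ => q.den) := by
  refine ((Computable.snd.comp Computable.unpair).comp rawCode_computable).of_eq fun q => ?_
  simp [rawCode]

theorem num_code_computable : Computable (fun q : ℚ => encode q.num) := by
  refine ((Computable.fst.comp Computable.unpair).comp rawCode_computable).of_eq fun q => ?_
  simp [rawCode]

theorem natAbs_computable : Computable (fun q : ℚ => q.num.natAbs) := by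
  refine ((Primrec.nat_div.comp Primrec.succ (Primrec.const 2)).to_comp.comp
    num_code_computable).of_eq fun q => ?_
  rw [natAbs_eq_code]

theorem natAbs_div {q : ℚ} (h : 0 ≤ q) : q = (q.num.natAbs : ℚ) / q.den := by
  conv_lhs => rw [← Rat.num_div_den q]
  rw [← Int.cast_natCast q.num.natAbs, Int.natAbs_of_nonneg (Rat.num_nonneg.2 h)]

theorem div_computable {N D : ℕ → ℕ} (hN : Computable N) (hD : Computable D)
    (h0 : ∀ n, 0 < D n) : Computable (fun n => (N n : ℚ) / D n) := by
  rw [← Computable.encode_iff]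
  have hof : Computable (fun p : ℕ × ℕ => Denumerable.ofNat ℚ p.2) :=
    (Computable.ofNat ℚ).comp Computable.snd
  have key : ∀ n (q : ℚ), ((encode q.num % 2 = 0) ∧ q.num.natAbs * D n = N n * q.den) ↔
      q = (N n : ℚ) / D n := by
    intro n q
    have hD0 : (D n : ℚ) ≠ 0 := by exact_mod_cast (h0 n).ne'
    have hd0 : (q.den : ℚ) ≠ 0 := by exact_mod_cast q.den_nz
    rw [← nonneg_iff_code, Rat.num_nonneg]
    constructor
    · rintro ⟨h1, h2⟩
      rw [natAbs_div h1, div_eq_div_iff hd0 hD0]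
      exact_mod_cast h2
    · intro h
      have h1 : 0 ≤ q := by rw [h]; positivity
      refine ⟨h1, ?_⟩
      rw [natAbs_div h1, div_eq_div_iff hd0 hD0] at h
      exact_mod_cast h
  refine computable_of_find (P := fun n k => (encode (Denumerable.ofNat ℚ k).num % 2 = 0) ∧
    (Denumerable.ofNat ℚ k).num.natAbs * D n = N n * (Denumerable.ofNat ℚ k).den) ?_ ?_ ?_
  · refine comp_pred_and ?_ ?_
    · exact comp_pred (p := fun m : ℕ => m % 2 = 0)
        (Primrec.eq.comp (Primrec.nat_mod.comp Primrec.id (Primrec.const 2)) (Primrec.const 0))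
        (num_code_computable.comp hof)
    · exact comp_pred (p := fun m : ℕ × ℕ => m.1 = m.2)
        (Primrec.eq.comp Primrec.fst Primrec.snd)
        (Computable.pair
          (Primrec.nat_mul.to_comp.comp (natAbs_computable.comp hof) (hD.comp Computable.fst))
          (Primrec.nat_mul.to_comp.comp (hN.comp Computable.fst) (den_computable.comp hof)))
  · intro n
    rw [Denumerable.ofNat_encode, key]
  · intro n k h
    rw [key] at h
    rw [← h, Denumerable.encode_ofNat]

/-- Numerators and denominators of the partial sums. -/
def psum (φ : ℕ → ℕ) (n : ℕ) : ℕ × ℕ :=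
  Nat.rec (0, 1) (fun k p => (p.1 * 2 ^ φ k + p.2, p.2 * 2 ^ φ k)) n

theorem two_pow_primrec : Primrec (fun n : ℕ => 2 ^ n) := by
  refine (Primrec.nat_rec₁ (f := fun _ m => 2 * m) 1
    (Primrec.nat_double.comp Primrec.snd)).of_eq fun n => ?_
  induction n with
  | zero => rfl
  | succ n ih => simp only [ih]; ring

theorem psum_computable {φ : ℕ → ℕ} (hφ : Computable φ) : Computable (psum φ) := by
  refine Computable.nat_rec (f := fun n : ℕ => n) (g := fun _ => ((0, 1) : ℕ × ℕ))
    (h := fun _ kp => (kp.2.1 * 2 ^ φ kp.1 + kp.2.2, kp.2.2 * 2 ^ φ kp.1))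
    Computable.id (Computable.const _) ?_
  have hk : Computable (fun p : ℕ × ℕ × ℕ × ℕ => 2 ^ φ p.2.1) :=
    two_pow_primrec.to_comp.comp (hφ.comp (Computable.fst.comp Computable.snd))
  have h2 : Computable (fun p : ℕ × ℕ × ℕ × ℕ => p.2.2) := Computable.snd.comp Computable.snd
  exact Computable.pair
    (Primrec.nat_add.to_comp.comp (Primrec.nat_mul.to_comp.comp (Computable.fst.comp h2) hk)
      (Computable.snd.comp h2))
    (Primrec.nat_mul.to_comp.comp (Computable.snd.comp h2) hk)

theorem psum_pos (φ : ℕ → ℕ) (n : ℕ) : 0 < (psum φ n).2 := by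
  induction n with
  | zero => exact Nat.one_pos
  | succ n ih => exact Nat.mul_pos ih (by positivity)

theorem psum_eq (φ : ℕ → ℕ) (n : ℕ) : ((psum φ n).1 : ℝ) / (psum φ n).2 =
    ∑ l ∈ Finset.range n, (2 : ℝ) ^ (-(φ l : ℤ)) := by
  induction n with
  | zero => simp [psum]
  | succ n ih =>
    have h1 : (psum φ (n + 1)).1 = (psum φ n).1 * 2 ^ φ n + (psum φ n).2 := rfl
    have h2 : (psum φ (n + 1)).2 = (psum φ n).2 * 2 ^ φ n := rfl
    have h3 : ((psum φ n).2 : ℝ) ≠ 0 := by exact_mod_cast (psum_pos φ n).ne'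
    rw [Finset.sum_range_succ, ← ih, h1, h2, zpow_neg, zpow_natCast]
    push_cast
    field_simp

theorem summable_phi {φ : ℕ → ℕ} (hinj : Function.Injective φ) :
    Summable (fun l => (2 : ℝ) ^ (-(φ l : ℤ))) := by
  have h := (summable_geometric_two).comp_injective hinj
  refine h.congr fun l => ?_
  simp

/-- If `φ : ℕ → ℕ` is an injective computable function whose range is not a
computable (decidable) subset of `ℕ`, then `∑ ℓ, 2^(-φ ℓ)` is left-computable but
not right-computable. -/
theorem stmt1 (φ : ℕ → ℕ) (hinj : Function.Injective φ) (hcomp : Computable φ)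
    (hrange : ¬ ComputablePred (fun n => n ∈ Set.range φ)) :
    LeftComputable (∑' ℓ : ℕ, (2 : ℝ) ^ (-(φ ℓ : ℤ))) ∧
    ¬ RightComputable (∑' ℓ : ℕ, (2 : ℝ) ^ (-(φ ℓ : ℤ))) := by
  have hsum := summable_phi hinj
  have hN : Computable (fun n => (psum φ n).1) := Computable.fst.comp (psum_computable hcomp)
  have hD : Computable (fun n => (psum φ n).2) := Computable.snd.comp (psum_computable hcomp)
  have hS := hsum.hasSum.tendsto_sum_nat
  have hpos : ∀ l, (0 : ℝ) < (2 : ℝ) ^ (-(φ l : ℤ)) := fun l => by positivity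
  constructor
  · refine ⟨_, div_computable hN hD (psum_pos φ), fun n => ?_, ?_⟩
    · have : (((psum φ n).1 : ℝ) / (psum φ n).2) ≤
          (((psum φ (n + 1)).1 : ℝ) / (psum φ (n + 1)).2) := by
        rw [psum_eq, psum_eq, Finset.sum_range_succ]
        linarith [hpos n]
      rw [← Rat.cast_le (K := ℝ)]
      push_cast
      exact this
    · refine hS.congr fun n => ?_
      rw [← psum_eq]
      push_cast
      rfl
  · rintro ⟨q, hq, hmono, hlim⟩
    apply hrange
    set x := ∑' ℓ : ℕ, (2 : ℝ) ^ (-(φ ℓ : ℤ)) with hx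
    have hanti : Antitone (fun n => (q n : ℝ)) :=
      antitone_nat_of_succ_le fun n => by exact_mod_cast hmono n
    have hle : ∀ n, x ≤ q n := fun n => hanti.le_of_tendsto hlim n
    have hx0 : 0 ≤ x := tsum_nonneg fun l => (hpos l).le
    have hq0 : ∀ n, 0 ≤ q n := fun n => by
      have := hx0.trans (hle n)
      exact_mod_cast this
    -- the search predicate, in natural numbers
    let P : ℕ → ℕ → Prop := fun n m =>
      (q m).num.natAbs * (psum φ m).2 * 2 ^ n <
        (q m).den * (psum φ m).2 + (psum φ m).1 * (q m).den * 2 ^ n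
    have hP : ∀ n m, P n m ↔
        (q m : ℝ) - ∑ l ∈ Finset.range m, (2 : ℝ) ^ (-(φ l : ℤ)) < (1 / 2) ^ n := by
      intro n m
      have hD0 : (0 : ℝ) < (psum φ m).2 := by exact_mod_cast psum_pos φ m
      have hd0 : (0 : ℝ) < (q m).den := by exact_mod_cast (q m).den_pos
      have hqm : (q m : ℝ) = ((q m).num.natAbs : ℝ) / (q m).den := by
        have := congrArg (fun r : ℚ => (r : ℝ)) (natAbs_div (hq0 m))
        refine this.trans ?_
        push_cast
        rfl
      rw [← psum_eq, hqm, div_sub_div _ _ hd0.ne' hD0.ne', one_div, inv_pow,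
        div_lt_iff₀ (by positivity), inv_mul_eq_div, lt_div_iff₀ (by positivity),
        sub_mul, sub_lt_iff_lt_add]
      constructor
      · intro h
        have h' : (((q m).num.natAbs * (psum φ m).2 * 2 ^ n : ℕ) : ℝ) <
          (((q m).den * (psum φ m).2 + (psum φ m).1 * (q m).den * 2 ^ n : ℕ) : ℝ) := by
          exact_mod_cast h
        push_cast at h'
        linarith
      · intro h
        have h' : (((q m).num.natAbs * (psum φ m).2 * 2 ^ n : ℕ) : ℝ) <
          (((q m).den * (psum φ m).2 + (psum φ m).1 * (q m).den * 2 ^ n : ℕ) : ℝ) := by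
          push_cast
          linarith
        exact_mod_cast h'
    have hex : ∀ n, ∃ m, P n m := by
      intro n
      have hd := hlim.sub hS
      rw [sub_self] at hd
      have hev := hd.eventually (gt_mem_nhds (show (0 : ℝ) < (1 / 2) ^ n by positivity))
      obtain ⟨m, hm⟩ := hev.exists
      exact ⟨m, (hP n m).2 hm⟩
    have hPc : ComputablePred (fun p : ℕ × ℕ => P p.1 p.2) := by
      have hqs := hq.comp (Computable.snd (α := ℕ) (β := ℕ))
      have hA := natAbs_computable.comp hqs
      have hB := den_computable.comp hqs
      have hN' := hN.comp (Computable.snd (α := ℕ) (β := ℕ))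
      have hD' := hD.comp (Computable.snd (α := ℕ) (β := ℕ))
      have hpw := two_pow_primrec.to_comp.comp (Computable.fst (α := ℕ) (β := ℕ))
      have hmul := Primrec.nat_mul.to_comp
      have hadd := Primrec.nat_add.to_comp
      exact comp_pred (p := fun m : ℕ × ℕ => m.1 < m.2)
        (Primrec.nat_lt.comp Primrec.fst Primrec.snd)
        (Computable.pair (hmul.comp (hmul.comp hA hD') hpw)
          (hadd.comp (hmul.comp hB hD') (hmul.comp (hmul.comp hN' hB) hpw)))
    classical
    have hfind := Computable.find hPc hex
    -- the list of the first `m` values of `φ`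
    have hlist : Computable (fun m : ℕ => (Nat.rec [] (fun k L => φ k :: L) m : List ℕ)) :=
      Computable.nat_rec (f := fun n : ℕ => n) (g := fun _ => ([] : List ℕ))
        (h := fun _ kp => φ kp.1 :: kp.2) Computable.id (Computable.const _)
        (Computable.list_cons.comp (hcomp.comp (Computable.fst.comp Computable.snd))
          (Computable.snd.comp Computable.snd))
    have hmem : ∀ m n : ℕ, n ∈ (Nat.rec [] (fun k L => φ k :: L) m : List ℕ) ↔
        ∃ l < m, φ l = n := by
      intro m n
      induction m with
      | zero => simp
      | succ m ih =>
        simp only [List.mem_cons, ih, Nat.lt_succ_iff_lt_or_eq]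
        constructor
        · rintro (h | ⟨l, h1, h2⟩)
          · exact ⟨m, Or.inr rfl, h.symm⟩
          · exact ⟨l, Or.inl h1, h2⟩
        · rintro ⟨l, h1 | rfl, h2⟩
          · exact Or.inr ⟨l, h1, h2⟩
          · exact Or.inl h2.symm
    have hrel : PrimrecRel (fun (L : List ℕ) (b : ℕ) => ∃ a ∈ L, a = b) :=
      PrimrecRel.exists_mem_list Primrec.eq
    have hfin := comp_pred hrel (Computable.pair (hlist.comp hfind) Computable.id)
    refine hfin.of_eq fun n => ?_
    simp only [id, exists_eq_right]
    rw [hmem]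
    constructor
    · rintro ⟨l, -, h⟩
      exact ⟨l, h⟩
    · rintro ⟨l, h⟩
      refine ⟨l, ?_, h⟩
      by_contra hl
      have h1 := (hP n _).1 (Nat.find_spec (hex n))
      have hm : Nat.find (hex n) ≤ l := not_lt.1 hl
      generalize Nat.find (hex n) = m at h1 hm
      have h2 : ∑ i ∈ insert l (Finset.range m), (2 : ℝ) ^ (-(φ i : ℤ)) ≤ x :=
        hsum.sum_le_tsum _ fun i _ => (hpos i).le
      rw [Finset.sum_insert (by simpa using hm), h, zpow_neg, zpow_natCast] at h2
      have h3 := hle m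
      rw [one_div, inv_pow] at h1
      linarith
end

section
/- Let g : ℝ → ℝ be the trapezoid function, let w_n ≥ 0 for n ≥ 1 with Σ_{n=1}^∞ w_n = 1, and let u_n ≥ 0 for n ≥ 1. Define f : ℝ → ℝ by f(α) = Σ_{n=1}^∞ w_n · g(|α| − u_n). Then f is well defined, nonnegative, even, vanishes on [−1,1], is integrable on ℝ, and ∫_ℝ f(α) dα = 1. -/
open Filter MeasureTheory

/-- The trapezoid function `g`: it vanishes outside `[1,4]`, rises linearly from `0`
to `1/4` on `[1,2]`, equals `1/4` on `[2,3]`, and falls linearly back to `0` on `[3,4]`.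
Note `∫ g = 1/2`. -/
noncomputable def trap (α : ℝ) : ℝ :=
  if α < 1 then 0
  else if α ≤ 2 then (α - 1) / 4
  else if α < 3 then 1 / 4
  else if α ≤ 4 then (4 - α) / 4
  else 0

theorem trap_eq (x : ℝ) :
    trap x = max 0 (min (1 / 4) (min ((x - 1) / 4) ((4 - x) / 4))) := by
  unfold trap
  simp only [max_def, min_def]
  split_ifs <;> linarith

theorem trap_nonneg (x : ℝ) : 0 ≤ trap x := by
  rw [trap_eq]; exact le_max_left _ _

theorem trap_le (x : ℝ) : trap x ≤ 1 := by
  rw [trap_eq]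
  exact max_le (by norm_num) ((min_le_left _ _).trans (by norm_num))

theorem trap_cont : Continuous trap := by
  have : trap = fun x => max 0 (min (1 / 4) (min ((x - 1) / 4) ((4 - x) / 4))) :=
    funext trap_eq
  rw [this]; fun_prop

theorem trap_zero_left {x : ℝ} (h : x ≤ 1) : trap x = 0 := by
  unfold trap; split_ifs <;> grind

theorem trap_zero_right {x : ℝ} (h : 4 ≤ x) : trap x = 0 := by
  unfold trap; split_ifs <;> grind

theorem trap_integral : ∫ x, trap x = 1 / 2 := by
  have h0 : ∫ x, trap x = ∫ x in (1 : ℝ)..4, trap x := by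
    rw [intervalIntegral.integral_of_le (by norm_num)]
    symm
    apply setIntegral_eq_integral_of_forall_compl_eq_zero
    intro x hx
    by_cases h : x ≤ 1
    · exact trap_zero_left h
    · apply trap_zero_right
      by_contra h4
      exact hx ⟨by linarith, by linarith⟩
  have hi : ∀ a b : ℝ, IntervalIntegrable trap volume a b :=
    fun a b => trap_cont.intervalIntegrable a b
  rw [h0, ← intervalIntegral.integral_add_adjacent_intervals (hi 1 3) (hi 3 4),
    ← intervalIntegral.integral_add_adjacent_intervals (hi 1 2) (hi 2 3)]
  have h1 : ∫ x in (1 : ℝ)..2, trap x = ∫ x in (1 : ℝ)..2, (x - 1) / 4 := by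
    apply intervalIntegral.integral_congr
    intro x hx
    rw [Set.uIcc_of_le (by norm_num)] at hx
    obtain ⟨h1, h2⟩ := hx
    show trap x = (x - 1) / 4
    unfold trap; split_ifs <;> grind
  have h2 : ∫ x in (2 : ℝ)..3, trap x = ∫ x in (2 : ℝ)..3, 1 / 4 := by
    apply intervalIntegral.integral_congr
    intro x hx
    rw [Set.uIcc_of_le (by norm_num)] at hx
    obtain ⟨h1, h2⟩ := hx
    show trap x = 1 / 4
    unfold trap; split_ifs <;> grind
  have h3 : ∫ x in (3 : ℝ)..4, trap x = ∫ x in (3 : ℝ)..4, (4 - x) / 4 := by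
    apply intervalIntegral.integral_congr
    intro x hx
    rw [Set.uIcc_of_le (by norm_num)] at hx
    obtain ⟨h1, h2⟩ := hx
    show trap x = (4 - x) / 4
    unfold trap; split_ifs <;> grind
  rw [h1, h2, h3]
  simp only [intervalIntegral.integral_div]
  rw [intervalIntegral.integral_sub (by simp) (by simp),
    intervalIntegral.integral_sub (by simp) (by simp)]
  simp only [integral_id, intervalIntegral.integral_const, smul_eq_mul]
  norm_num

theorem trap_abs_integral {c : ℝ} (hc : 0 ≤ c) : ∫ x : ℝ, trap (|x| - c) = 1 := by
  rw [integral_comp_abs (f := fun y => trap (y - c))]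
  rw [setIntegral_eq_integral_of_forall_compl_eq_zero]
  · rw [integral_sub_right_eq_self trap c, trap_integral]; norm_num
  · intro x hx
    have : x ≤ 0 := by simpa using hx
    exact trap_zero_left (by linarith)

theorem trap_abs_integrable {c : ℝ} (hc : 0 ≤ c) :
    Integrable (fun x : ℝ => trap (|x| - c)) := by
  by_contra h
  have := integral_undef h
  rw [trap_abs_integral hc] at this
  exact one_ne_zero this

/-- If `wₙ ≥ 0` with `Σ_{n≥1} wₙ = 1` and `uₙ ≥ 0`, then
`f(α) = Σ_{n≥1} wₙ g(|α| - uₙ)` is a well-defined, nonnegative, even density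
vanishing on `[-1,1]`, integrable, with `∫ f = 1`. -/
theorem stmt9 (w u : ℕ → ℝ) (hw : ∀ n : ℕ, 1 ≤ n → 0 ≤ w n)
    (hsum : HasSum (fun n : ℕ => w (n + 1)) 1)
    (hu : ∀ n : ℕ, 1 ≤ n → 0 ≤ u n)
    (f : ℝ → ℝ) (hf : ∀ α, f α = ∑' n : ℕ, w (n + 1) * trap (|α| - u (n + 1))) :
    (∀ α : ℝ, Summable (fun n : ℕ => w (n + 1) * trap (|α| - u (n + 1)))) ∧
    (∀ α, 0 ≤ f α) ∧
    (∀ α, f (-α) = f α) ∧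
    (∀ α, |α| ≤ 1 → f α = 0) ∧
    Integrable f ∧
    (∫ α, f α) = 1 := by
  have hw' : ∀ n, 0 ≤ w (n + 1) := fun n => hw _ (by omega)
  have hu' : ∀ n, 0 ≤ u (n + 1) := fun n => hu _ (by omega)
  have hint : (∫ α, f α) = 1 := by
    have hF : ∀ n, ∫ α : ℝ, w (n + 1) * trap (|α| - u (n + 1)) = w (n + 1) := fun n => by
      rw [integral_const_mul, trap_abs_integral (hu' n), mul_one]
    have key := hasSum_integral_of_summable_integral_norm (μ := (volume : Measure ℝ))
      (F := fun n α => w (n + 1) * trap (|α| - u (n + 1)))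
      (fun n => (trap_abs_integrable (hu' n)).const_mul _) (by
        have : ∀ n, (∫ α : ℝ, ‖w (n + 1) * trap (|α| - u (n + 1))‖) = w (n + 1) := fun n => by
          refine Eq.trans ?_ (hF n)
          congr 1
          funext α
          exact Real.norm_of_nonneg (mul_nonneg (hw' n) (trap_nonneg _))
        simp only [this]
        exact hsum.summable)
    simp only [hF] at key
    rw [funext hf]
    exact key.unique hsum
  refine ⟨fun α => ?_, fun α => ?_, fun α => ?_, fun α hα => ?_, ?_, hint⟩
  · exact Summable.of_nonneg_of_le (fun n => mul_nonneg (hw' n) (trap_nonneg _))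
      (fun n => mul_le_of_le_one_right (hw' n) (trap_le _)) hsum.summable
  · rw [hf]
    exact tsum_nonneg fun n => mul_nonneg (hw' n) (trap_nonneg _)
  · rw [hf, hf, abs_neg]
  · rw [hf]
    have : ∀ n, w (n + 1) * trap (|α| - u (n + 1)) = 0 := fun n => by
      rw [trap_zero_left (by linarith [hu' n]), mul_zero]
    simp [this]
  · by_contra h
    rw [integral_undef h] at hint
    exact zero_ne_one hint
end

section
/- Let φ : ℕ → ℕ be injective. For each integer M ≥ 4 let K_M = ∫₀^∞ g_M(α) ln α dα, define g*(α) = Σ_{M=4}^∞ 2^(−φ(M)) · g_M(α)/K_M, let c₂ = ∫₀^∞ g*(α) dα, and define f*(α) = g*(|α|)/(2c₂). Then f* is a continuous, even, nonnegative integrable function vanishing on [−1,1] with ∫_ℝ f*(α) dα = 1, moreover ∫₀^∞ g*(α) ln α dα = Σ_{M=4}^∞ 2^(−φ(M)), and ∫_ℝ ln(α²) f*(α) dα = (2/c₂) · Σ_{M=4}^∞ 2^(−φ(M)). -/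
open Filter MeasureTheory

/-- For `M ≥ 4`, the function `g_M` from Lemma 1 of the paper. -/
noncomputable def gM (M : ℕ) (α : ℝ) : ℝ :=
  if α ≤ 2 then 0
  else if α ≤ 3 then (α - 2) / (3 * (Real.log 3) ^ 2)
  else if α ≤ M then 1 / (α * (Real.log α) ^ 2)
  else if α ≤ M + 1 then ((M : ℝ) + 1 - α) / (M * (Real.log M) ^ 2)
  else 0

/-- `K_M = ∫₀^∞ g_M(α) ln α dα`. -/
noncomputable def Kconst (M : ℕ) : ℝ :=
  ∫ α in Set.Ioi (0 : ℝ), gM M α * Real.log α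

lemma aux_log3 : 1 ≤ Real.log 3 := by
  rw [Real.le_log_iff_exp_le (by norm_num)]
  linarith [Real.exp_one_lt_d9]

/-- The clamped form of `gM`. -/
lemma gM_eq (M : ℕ) (hM : 4 ≤ M) (α : ℝ) : gM M α =
    1 / (max 3 (min α M) * (Real.log (max 3 (min α M))) ^ 2) *
      (max 0 (min (α - 2) 1) * max 0 (min ((M : ℝ) + 1 - α) 1)) := by
  have hM' : (4 : ℝ) ≤ M := by exact_mod_cast hM
  unfold gM
  split_ifs with h1 h2 h3 h4
  · rw [max_eq_left (a := (0 : ℝ)) (b := min (α - 2) 1)]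
    · simp
    · exact (min_le_left _ _).trans (by linarith)
  · push Not at h1
    rw [min_eq_left (a := α) (by linarith), max_eq_left (a := (3 : ℝ)) h2,
      min_eq_left (a := α - 2) (by linarith), min_eq_right (a := (M : ℝ) + 1 - α) (by linarith),
      max_eq_right (by linarith), max_eq_right (by linarith)]
    ring
  · push Not at h1 h2
    rw [min_eq_left (a := α) (by linarith), max_eq_right (a := (3 : ℝ)) h2.le,
      min_eq_right (a := α - 2) (by linarith), min_eq_right (a := (M : ℝ) + 1 - α) (by linarith),
      max_eq_right (by linarith)]
    ring
  · push Not at h1 h2 h3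
    rw [min_eq_right (a := α) (by linarith), max_eq_right (a := (3 : ℝ)) (by linarith),
      min_eq_right (a := α - 2) (by linarith), min_eq_left (a := (M : ℝ) + 1 - α) (by linarith),
      max_eq_right (by linarith), max_eq_right (by linarith)]
    ring
  · push Not at h4
    rw [max_eq_left (a := (0 : ℝ)) (b := min ((M : ℝ) + 1 - α) 1)]
    · simp
    · exact (min_le_left _ _).trans (by linarith)

lemma aux_den (x : ℝ) : 1 ≤ max 3 x * (Real.log (max 3 x)) ^ 2 := by
  have h3 : (3 : ℝ) ≤ max 3 x := le_max_left _ _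
  have hl : 1 ≤ Real.log (max 3 x) :=
    aux_log3.trans (Real.log_le_log (by norm_num) h3)
  nlinarith [one_le_pow₀ hl (n := 2)]

lemma gM_cont (M : ℕ) (hM : 4 ≤ M) : Continuous (gM M) := by
  rw [funext (gM_eq M hM)]
  have hl : Continuous fun α : ℝ => Real.log (max 3 (min α M)) := by
    refine Continuous.log (by fun_prop) fun x => ?_
    have : (3 : ℝ) ≤ max 3 (min x M) := le_max_left _ _
    linarith
  refine Continuous.mul ?_ (by fun_prop)
  refine Continuous.div (by fun_prop) (by fun_prop) fun x => ?_
  have := aux_den (min x M)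
  linarith

lemma gM_nonneg (M : ℕ) (hM : 4 ≤ M) (α : ℝ) : 0 ≤ gM M α := by
  rw [gM_eq M hM]
  have := aux_den (min α M)
  positivity

lemma gM_le (M : ℕ) (hM : 4 ≤ M) (α : ℝ) : gM M α ≤ 1 := by
  rw [gM_eq M hM]
  have h := aux_den (min α M)
  have h1 : max 0 (min (α - 2) 1) ≤ 1 := max_le zero_le_one (min_le_right _ _)
  have h2 : max 0 (min ((M : ℝ) + 1 - α) 1) ≤ 1 := max_le zero_le_one (min_le_right _ _)
  refine mul_le_one₀ ?_ (by positivity) (mul_le_one₀ h1 (by positivity) h2)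
  rw [div_le_one (by linarith)]
  exact h

lemma gM_zero (M : ℕ) (α : ℝ) (h : α ≤ 2) : gM M α = 0 := by
  simp [gM, h]

lemma gM_zero' (M : ℕ) (hM : 4 ≤ M) (α : ℝ) (h : (M : ℝ) + 1 < α) : gM M α = 0 := by
  rw [gM_eq M hM, max_eq_left (a := (0 : ℝ)) (b := min ((M : ℝ) + 1 - α) 1)]
  · simp
  · exact (min_le_left _ _).trans (by linarith)

lemma gMlog_nonneg (M : ℕ) (hM : 4 ≤ M) (α : ℝ) : 0 ≤ gM M α * Real.log α := by
  by_cases h : α ≤ 2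
  · simp [gM_zero M α h]
  · exact mul_nonneg (gM_nonneg M hM α) (Real.log_nonneg (by linarith))

lemma gMlog_int (M : ℕ) (hM : 4 ≤ M) : Integrable (fun α => gM M α * Real.log α) := by
  have he : (fun α => gM M α * Real.log α) = fun α => gM M α * Real.log (max 1 α) := by
    funext α
    by_cases h : α ≤ 2
    · simp [gM_zero M α h]
    · rw [max_eq_right (by linarith)]
  rw [he]
  refine Continuous.integrable_of_hasCompactSupport ?_ ?_
  · refine (gM_cont M hM).mul (Continuous.log (by fun_prop) fun x => ?_)
    have : (1 : ℝ) ≤ max 1 x := le_max_left _ _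
    linarith
  · refine HasCompactSupport.intro (isCompact_Icc (a := (2 : ℝ)) (b := (M : ℝ) + 1)) fun x hx => ?_
    by_cases h : x ≤ 2
    · simp [gM_zero M x h]
    · have : (M : ℝ) + 1 < x := by
        by_contra h'
        exact hx ⟨by linarith, by linarith⟩
      simp [gM_zero' M hM x this]

lemma K_lower (M : ℕ) (hM : 4 ≤ M) : 1 / (4 * Real.log 4) ≤ Kconst M := by
  have hM' : (4 : ℝ) ≤ M := by exact_mod_cast hM
  have h1 : ∫ α in Set.Ioc (3 : ℝ) 4, gM M α * Real.log α ≤ Kconst M := by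
    refine setIntegral_mono_set (gMlog_int M hM).integrableOn ?_ ?_
    · exact Filter.Eventually.of_forall fun x => gMlog_nonneg M hM x
    · refine HasSubset.Subset.eventuallyLE ?_
      intro x hx
      have := hx.1
      simp only [Set.mem_Ioi]; linarith
  refine le_trans ?_ h1
  have h2 : ∫ α in Set.Ioc (3 : ℝ) 4, 1 / (4 * Real.log 4) = 1 / (4 * Real.log 4) := by
    rw [setIntegral_const]
    norm_num [Measure.real]
  rw [← h2]
  refine setIntegral_mono_on (integrableOn_const (by simp)) (gMlog_int M hM).integrableOn
    measurableSet_Ioc ?_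
  intro x hx
  have hl : 1 ≤ Real.log x := aux_log3.trans (Real.log_le_log (by norm_num) hx.1.le)
  have hl4 : Real.log x ≤ Real.log 4 := Real.log_le_log (by linarith [hx.1]) hx.2
  have hx0 : 0 < x := by linarith [hx.1]
  have : gM M x * Real.log x = 1 / (x * Real.log x) := by
    have a1 := hx.1
    have a2 := hx.2
    simp only [gM]
    rw [if_neg (by linarith), if_neg (by linarith), if_pos (by linarith)]
    field_simp
  rw [this]
  refine one_div_le_one_div_of_le (by positivity) ?_
  exact mul_le_mul hx.2 hl4 (by linarith) (by norm_num)

lemma log4_pos : 0 < 1 / (4 * Real.log 4) := by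
  have : 0 < Real.log 4 := Real.log_pos (by norm_num)
  positivity

/-- Lemma 1 of the paper: for injective `φ`, the density
`f*(α) = g*(|α|)/(2c₂)` with `g* = Σ_{M≥4} 2^{-φ(M)} g_M/K_M` and
`c₂ = ∫₀^∞ g*` is a continuous, even, nonnegative density vanishing on `[-1,1]`
with `∫ f* = 1`, `∫₀^∞ g*(α) ln α dα = Σ_{M≥4} 2^{-φ(M)}`, and
`∫ ln(α²) f*(α) dα = (2/c₂) Σ_{M≥4} 2^{-φ(M)}`. -/
theorem stmt15 (φ : ℕ → ℕ) (hinj : Function.Injective φ)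
    (gstar : ℝ → ℝ)
    (hgstar : ∀ α, gstar α =
      ∑' k : ℕ, (2 : ℝ) ^ (-(φ (k + 4) : ℤ)) * gM (k + 4) α / Kconst (k + 4))
    (c₂ : ℝ) (hc₂ : c₂ = ∫ α in Set.Ioi (0 : ℝ), gstar α)
    (fstar : ℝ → ℝ) (hfstar : ∀ α, fstar α = gstar |α| / (2 * c₂)) :
    Continuous fstar ∧
    (∀ α, fstar (-α) = fstar α) ∧
    (∀ α, 0 ≤ fstar α) ∧
    Integrable fstar ∧
    (∀ α, |α| ≤ 1 → fstar α = 0) ∧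
    (∫ α, fstar α) = 1 ∧
    (∫ α in Set.Ioi (0 : ℝ), gstar α * Real.log α) =
      ∑' k : ℕ, (2 : ℝ) ^ (-(φ (k + 4) : ℤ)) ∧
    (∫ α, Real.log (α ^ 2) * fstar α) =
      (2 / c₂) * ∑' k : ℕ, (2 : ℝ) ^ (-(φ (k + 4) : ℤ)) := by
  have hS : Summable fun k : ℕ => (2 : ℝ) ^ (-(φ (k + 4) : ℤ)) := by
    have h := (summable_geometric_of_lt_one (r := (1 / 2 : ℝ)) (by norm_num)
      (by norm_num)).comp_injective (hinj.comp (add_left_injective 4))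
    refine h.congr fun k => ?_
    simp [zpow_neg]
  have ha : ∀ k : ℕ, 0 < (2 : ℝ) ^ (-(φ (k + 4) : ℤ)) := fun k => by positivity
  have hK : ∀ k : ℕ, 0 < Kconst (k + 4) := fun k => log4_pos.trans_le (K_lower _ (by omega))
  set a : ℕ → ℝ := fun k => (2 : ℝ) ^ (-(φ (k + 4) : ℤ)) with ha_def
  have hSpos : 0 < ∑' k, a k := hS.tsum_pos (fun k => (ha k).le) 0 (ha 0)
  have hnn : ∀ k α, 0 ≤ a k * gM (k + 4) α / Kconst (k + 4) := fun k α =>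
    div_nonneg (mul_nonneg (ha k).le (gM_nonneg _ (by omega) α)) (hK k).le
  have hgnn : ∀ α, 0 ≤ gstar α := fun α => by
    rw [hgstar]; exact tsum_nonneg fun k => hnn k α
  have hg0 : ∀ α, α ≤ 2 → gstar α = 0 := fun α h => by
    rw [hgstar]; simp [gM_zero _ α h]
  have hgc : Continuous gstar := by
    rw [funext hgstar]
    refine continuous_tsum (u := fun k => a k / (1 / (4 * Real.log 4)))
      (fun k => ((gM_cont (k + 4) (by omega)).const_mul _).div_const _) (hS.div_const _) ?_
    intro k x
    have hn := hnn k x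
    rw [Real.norm_of_nonneg hn]
    refine div_le_div₀ (ha k).le ?_ log4_pos (K_lower _ (by omega))
    exact mul_le_of_le_one_right (ha k).le (gM_le _ (by omega) x)
  have hlog : (∫ α in Set.Ioi (0 : ℝ), gstar α * Real.log α) = ∑' k, a k := by
    have hI : ∀ k, ∫ α in Set.Ioi (0 : ℝ), a k / Kconst (k + 4) * (gM (k + 4) α * Real.log α)
        = a k := fun k => by
      rw [integral_const_mul]
      exact div_mul_cancel₀ _ (hK k).ne'
    have hs := hasSum_integral_of_summable_integral_norm (μ := volume.restrict (Set.Ioi (0 : ℝ)))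
      (F := fun k α => a k / Kconst (k + 4) * (gM (k + 4) α * Real.log α))
      (fun k => ((gMlog_int (k + 4) (by omega)).const_mul _).integrableOn) (by
        refine hS.congr fun k => ?_
        have : ∀ α, ‖a k / Kconst (k + 4) * (gM (k + 4) α * Real.log α)‖
            = a k / Kconst (k + 4) * (gM (k + 4) α * Real.log α) := fun α =>
          Real.norm_of_nonneg (mul_nonneg (div_nonneg (ha k).le (hK k).le)
            (gMlog_nonneg _ (by omega) α))
        simp only [this]
        exact (hI k).symm)
    simp only [hI] at hs
    rw [hs.tsum_eq]
    congr 1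
    funext α
    rw [hgstar, ← tsum_mul_right]
    refine tsum_congr fun k => ?_
    ring
  have hlint : IntegrableOn (fun α => gstar α * Real.log α) (Set.Ioi (0 : ℝ)) := by
    by_contra h
    have h0 := integral_undef h
    rw [h0] at hlog
    linarith
  have hgint : IntegrableOn gstar (Set.Ioi (0 : ℝ)) := by
    refine Integrable.mono' (hlint.const_mul 2) hgc.aestronglyMeasurable
      (Filter.Eventually.of_forall fun x => ?_)
    rw [Real.norm_of_nonneg (hgnn x)]
    by_cases h : x ≤ 2
    · simp [hg0 x h]
    · have : Real.log 2 ≤ Real.log x := Real.log_le_log (by norm_num) (by linarith)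
      have := Real.log_two_gt_d9
      nlinarith [hgnn x]
  have hc : 0 < c₂ := by
    have h0 : 0 ≤ c₂ := by rw [hc₂]; exact integral_nonneg fun x => hgnn x
    refine lt_of_le_of_ne h0 fun h => ?_
    rw [hc₂] at h
    have hz := (integral_eq_zero_iff_of_nonneg (fun x => hgnn x) hgint).1 h.symm
    have : (∫ α in Set.Ioi (0 : ℝ), gstar α * Real.log α) = 0 := by
      refine integral_eq_zero_of_ae ?_
      filter_upwards [hz] with x hx
      simp [hx]
    linarith
  have h1 : (∫ α, fstar α) = 1 := by
    simp only [hfstar]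
    rw [integral_comp_abs (f := fun x => gstar x / (2 * c₂)), integral_div, ← hc₂]
    field_simp
  refine ⟨?_, ?_, ?_, ?_, ?_, h1, hlog, ?_⟩
  · rw [funext hfstar]
    exact (hgc.comp continuous_abs).div_const _
  · intro α; simp [hfstar]
  · intro α
    rw [hfstar]
    exact div_nonneg (hgnn _) (by linarith)
  · by_contra h
    rw [integral_undef h] at h1
    norm_num at h1
  · intro α h
    rw [hfstar, hg0 _ (by linarith)]
    simp
  · have : ∀ α, Real.log (α ^ 2) * fstar α =
        (fun x => (1 / c₂) * (gstar x * Real.log x)) |α| := fun α => by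
      simp only [hfstar, Real.log_pow, Real.log_abs]
      push_cast
      field_simp
    simp only [this]
    rw [integral_comp_abs (f := fun x => (1 / c₂) * (gstar x * Real.log x)),
      integral_const_mul, hlog]
    ring
end
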